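/- arXiv:2409.13161 — 10 statements merged into one kernel-verified Lean document; each statement's English description precedes it below -/
import Mathlib

section
/- Let G be a 2K2-free finite simple graph and suppose V(G) is partitioned into independent sets A_1, A_2, …, A_i such that A_1 is an inclusion-wise maximal independent set of G. Then for each j ∈ {2, …, i}, A_1 contains a vertex that is adjacent to every vertex of A_j. -/
/-- A graph is `2K₂`-free if it has no induced subgraph isomorphic to `2K₂`
(two vertex-disjoint edges with no edges between them). -/
def TwoK2Free {V : Type*} (G : SimpleGraph V) : Prop :=
  ¬ ∃ a b c d : V, G.Adj a b ∧ G.Adj c d ∧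
      ¬ G.Adj a c ∧ ¬ G.Adj a d ∧ ¬ G.Adj b c ∧ ¬ G.Adj b d

/-- If a 2K₂-free graph has its vertex set partitioned into independent
sets `A 0, A 1, …, A m` with `A 0` inclusion-wise maximal, then for each `j ≠ 0`
there is a vertex of `A 0` adjacent to every vertex of `A j`. -/
theorem stmt0 {V : Type*} [Fintype V] [Nonempty V] (G : SimpleGraph V)
    (hG : TwoK2Free G) (m : ℕ) (A : Fin (m+1) → Set V)
    (hcover : ∀ v : V, ∃ j, v ∈ A j)
    (hdisj : ∀ j j' : Fin (m+1), j ≠ j' → Disjoint (A j) (A j'))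
    (hindep : ∀ j, ∀ a ∈ A j, ∀ b ∈ A j, ¬ G.Adj a b)
    (hmax : ∀ S : Set V, A 0 ⊆ S → (∀ a ∈ S, ∀ b ∈ S, ¬ G.Adj a b) → S = A 0) :
    ∀ j : Fin (m+1), j ≠ 0 → ∃ x ∈ A 0, ∀ y ∈ A j, G.Adj x y := by
  classical
  have hdom : ∀ v, v ∉ A 0 → ∃ x ∈ A 0, G.Adj x v := by
    intro v hv
    by_contra hcon
    push Not at hcon
    have h := hmax (insert v (A 0)) (Set.subset_insert _ _) (by
      intro a ha b hb hab
      rcases ha with rfl | ha <;> rcases hb with rfl | hb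
      · exact G.loopless.irrefl _ hab
      · exact hcon b hb hab.symm
      · exact hcon a ha hab
      · exact hindep 0 a ha b hb hab)
    exact hv (h ▸ Set.mem_insert v (A 0))
  have hne : (A 0).Nonempty := by
    obtain ⟨v⟩ := ‹Nonempty V›
    by_cases hv : v ∈ A 0
    · exact ⟨v, hv⟩
    · obtain ⟨x, hx, _⟩ := hdom v hv
      exact ⟨x, hx⟩
  intro j hj
  obtain ⟨x, hx, hxmax⟩ := Set.exists_max_image (A 0)
    (fun x => (Finset.univ.filter (fun z => z ∈ A j ∧ G.Adj x z)).card) (Set.toFinite _) hne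
  refine ⟨x, hx, fun y hy => ?_⟩
  by_contra hxy
  have hy0 : y ∉ A 0 := fun h => Set.disjoint_left.mp (hdisj j 0 hj) hy h
  obtain ⟨x', hx', hadj⟩ := hdom y hy0
  refine absurd (hxmax x' hx') (not_le.mpr (Finset.card_lt_card ?_))
  rw [Finset.ssubset_iff_of_subset]
  · exact ⟨y, by simp [hy, hadj], by simp [hxy]⟩
  · intro z hz
    simp only [Finset.mem_filter, Finset.mem_univ, true_and] at hz ⊢
    refine ⟨hz.1, ?_⟩
    by_contra hn
    exact hG ⟨x, z, x', y, hz.2, hadj, hindep 0 x hx x' hx', hxy,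
      fun h => hn h.symm, hindep j z hz.1 y hy⟩
end

section
/- For every integer q ≥ 2, the graph MEbar_q is C4-free. -/
/-- A graph is `C₄`-free if it has no induced subgraph isomorphic to the 4-cycle. -/
def C4Free {V : Type*} (G : SimpleGraph V) : Prop :=
  ¬ ∃ a b c d : V, a ≠ c ∧ b ≠ d ∧ G.Adj a b ∧ G.Adj b c ∧ G.Adj c d ∧ G.Adj d a ∧
      ¬ G.Adj a c ∧ ¬ G.Adj b d

/-- The graph `MEbar_q`.  The vertices `0, 1, …, q+1` of `Fin (4q+2)` are
`u_0, …, u_{q+1}` and, for `1 ≤ i ≤ q`, the vertices `q+3i-1, q+3i, q+3i+1` are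
`v_{i1}, v_{i2}, v_{i3}`; listed in this order the vertices form a Hamiltonian cycle,
and the extra edges are `u_i v_{i2}` and `v_{i1} v_{i3}` for `1 ≤ i ≤ q`. -/
def MEbar (q : ℕ) : SimpleGraph (Fin (4*q+2)) :=
  SimpleGraph.fromRel (fun a b =>
    b.val = a.val + 1 ∨ (a.val = 0 ∧ b.val = 4*q+1) ∨
    (∃ i, 1 ≤ i ∧ i ≤ q ∧ a.val = i ∧ b.val = q + 3*i) ∨
    (∃ i, 1 ≤ i ∧ i ≤ q ∧ a.val = q + 3*i - 1 ∧ b.val = q + 3*i + 1))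

def MEF (q a b : ℕ) : Prop :=
    b = a + 1 ∨ (a = 0 ∧ b = 4*q+1) ∨
    (∃ i, 1 ≤ i ∧ i ≤ q ∧ a = i ∧ b = q + 3*i) ∨
    (∃ i, 1 ≤ i ∧ i ≤ q ∧ a = q + 3*i - 1 ∧ b = q + 3*i + 1)

theorem MEF_lt {q a b : ℕ} (h : MEF q a b) : a < b := by
  rcases h with h | h | ⟨i, h⟩ | ⟨i, h⟩ <;> omega

theorem MEF_key {q a b c d : ℕ} (hq : 2 ≤ q) (hac : a < c) (hbd : b < d)
    (hab : MEF q a b) (had : MEF q a d) (hbc : MEF q b c ∨ MEF q c b)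
    (hdc : MEF q d c ∨ MEF q c d) (hd : d < 4*q+2) (hc : c < 4*q+2) : False := by
  rcases hab with h1 | h1 | ⟨i, h1⟩ | ⟨i, h1⟩ <;>
  rcases had with h2 | h2 | ⟨j, h2⟩ | ⟨j, h2⟩ <;> try omega
  all_goals
    rcases hbc with (h3 | h3 | ⟨k, h3⟩ | ⟨k, h3⟩) | (h3 | h3 | ⟨k, h3⟩ | ⟨k, h3⟩) <;> try omega
  all_goals
    rcases hdc with (h4 | h4 | ⟨l, h4⟩ | ⟨l, h4⟩) | (h4 | h4 | ⟨l, h4⟩ | ⟨l, h4⟩) <;> omega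

theorem MEF_min {q a b c d : ℕ} (hq : 2 ≤ q) (hac : a < c) (hbd : b ≠ d) (hb' : a ≤ b) (hd' : a ≤ d)
    (hab : MEF q a b ∨ MEF q b a) (hbc : MEF q b c ∨ MEF q c b)
    (hcd : MEF q c d ∨ MEF q d c) (hda : MEF q d a ∨ MEF q a d)
    (hb : b < 4*q+2) (hc : c < 4*q+2) (hd : d < 4*q+2) : False := by
  have h1 : MEF q a b := hab.resolve_right fun h => by have := MEF_lt h; omega
  have h2 : MEF q a d := hda.resolve_left fun h => by have := MEF_lt h; omega
  rcases lt_or_gt_of_ne hbd with h | h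
  · exact MEF_key hq hac h h1 h2 hbc hcd.symm hd hc
  · exact MEF_key hq hac h h2 h1 hcd.symm hbc hb hc

/-- for every `q ≥ 2`, the graph `MEbar_q` is `C₄`-free. -/
theorem stmt5 : ∀ q : ℕ, 2 ≤ q → C4Free (MEbar q) := by
  rintro q hq ⟨a, b, c, d, hac, hbd, hab, hbc, hcd, hda, -, -⟩
  have h1 : MEF q a b ∨ MEF q b a := hab.2
  have h2 : MEF q b c ∨ MEF q c b := hbc.2
  have h3 : MEF q c d ∨ MEF q d c := hcd.2
  have h4 : MEF q d a ∨ MEF q a d := hda.2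
  have hac' : a.val ≠ c.val := fun h => hac (Fin.ext h)
  have hbd' : b.val ≠ d.val := fun h => hbd (Fin.ext h)
  have ha := a.isLt
  have hb := b.isLt
  have hc := c.isLt
  have hd := d.isLt
  have hm : (a.val < c ∧ a.val ≤ b ∧ a.val ≤ d) ∨ (c.val < a ∧ c.val ≤ b ∧ c.val ≤ d) ∨
      (b.val < d ∧ b.val ≤ a ∧ b.val ≤ c) ∨ (d.val < b ∧ d.val ≤ a ∧ d.val ≤ c) := by omega
  rcases hm with ⟨x, y, z⟩ | ⟨x, y, z⟩ | ⟨x, y, z⟩ | ⟨x, y, z⟩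
  · exact MEF_min hq x hbd' y z h1 h2 h3 h4 hb hc hd
  · exact MEF_min hq x hbd'.symm z y h3 h4 h1 h2 hd ha hb
  · exact MEF_min hq x hac'.symm z y h2 h3 h4 h1 hc hd ha
  · exact MEF_min hq x hac' y z h4 h1 h2 h3 ha hb hc
end

section
/- For every integer q ≥ 2, the graph ME_q (the complement of MEbar_q) is 2K2-free. -/
def RR (q x y : ℕ) : Prop :=
  y = x + 1 ∨ (x = 0 ∧ y = 4*q+1) ∨ (1 ≤ x ∧ x ≤ q ∧ y = q + 3*x) ∨
    (∃ i, 1 ≤ i ∧ i ≤ q ∧ x + 1 = q + 3*i ∧ y = q + 3*i + 1)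

theorem RR_lt {q x y : ℕ} (hq : 2 ≤ q) (h : RR q x y) : x < y := by
  rcases h with h | h | h | ⟨i, h⟩ <;> omega

theorem RR_of_adj {q : ℕ} (hq : 2 ≤ q) {a b : Fin (4*q+2)} (h : (MEbar q).Adj a b) :
    RR q a.val b.val ∨ RR q b.val a.val := by
  rw [MEbar, SimpleGraph.fromRel_adj] at h
  obtain ⟨_, h | h⟩ := h
  · left
    rcases h with h | h | ⟨i, h⟩ | ⟨i, h⟩
    · exact Or.inl h
    · exact Or.inr (Or.inl h)
    · exact Or.inr (Or.inr (Or.inl (by omega)))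
    · exact Or.inr (Or.inr (Or.inr ⟨i, by omega⟩))
  · right
    rcases h with h | h | ⟨i, h⟩ | ⟨i, h⟩
    · exact Or.inl h
    · exact Or.inr (Or.inl h)
    · exact Or.inr (Or.inr (Or.inl (by omega)))
    · exact Or.inr (Or.inr (Or.inr ⟨i, by omega⟩))

theorem key_lt {q a b c d : ℕ} (hq : 2 ≤ q) (ha : a < 4*q+2) (hba : b < a)
    (hcd : c < d) (h1 : d ≠ c + 1)
    (hac : RR q c a) (had : RR q d a) (hbc : RR q b c ∨ RR q c b)
    (hbd : RR q b d ∨ RR q d b) : False := by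
  rcases hac with h | h | h | ⟨i, h⟩ <;> rcases had with h' | h' | h' | ⟨i', h'⟩ <;>
  first
  | omega
  | (rcases hbc with (k | k | k | ⟨j, k⟩) | (k | k | k | ⟨j, k⟩) <;>
     first
     | omega
     | (rcases hbd with (l | l | l | ⟨m, l⟩) | (l | l | l | ⟨m, l⟩) <;> omega))

theorem key_max {q : ℕ} (hq : 2 ≤ q) {a b c d : Fin (4*q+2)} (hab : a ≠ b) (hcd : c ≠ d)
    (ncd : ¬ (MEbar q).Adj c d)
    (hac : (MEbar q).Adj a c) (had : (MEbar q).Adj a d)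
    (hbc : (MEbar q).Adj b c) (hbd : (MEbar q).Adj b d)
    (h1 : b ≤ a) (h2 : c ≤ a) (h3 : d ≤ a) : False := by
  have e1 : d.val ≠ c.val + 1 := fun h => ncd (by
    rw [MEbar, SimpleGraph.fromRel_adj]; exact ⟨hcd, Or.inl (Or.inl h)⟩)
  have e2 : c.val ≠ d.val + 1 := fun h => ncd (by
    rw [MEbar, SimpleGraph.fromRel_adj]; exact ⟨hcd, Or.inr (Or.inl h)⟩)
  have hba : b.val < a.val := lt_of_le_of_ne h1 (fun h => hab (Fin.ext h.symm))
  have f1 : RR q c.val a.val := (RR_of_adj hq hac).resolve_left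
    (fun h => absurd (RR_lt hq h) (not_lt.mpr h2))
  have f2 : RR q d.val a.val := (RR_of_adj hq had).resolve_left
    (fun h => absurd (RR_lt hq h) (not_lt.mpr h3))
  rcases lt_or_gt_of_ne (fun h => hcd (Fin.ext h) : c.val ≠ d.val) with h | h
  · exact key_lt hq a.isLt hba h e1 f1 f2 (RR_of_adj hq hbc) (RR_of_adj hq hbd)
  · exact key_lt hq a.isLt hba h e2 f2 f1 (RR_of_adj hq hbd) (RR_of_adj hq hbc)

/-- for every `q ≥ 2`, the graph `ME_q` (the complement of `MEbar_q`)
is `2K₂`-free. -/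
theorem stmt6 : ∀ q : ℕ, 2 ≤ q → TwoK2Free (MEbar q)ᶜ := by
  rintro q hq ⟨a, b, c, d, hab, hcd, hac, had, hbc, hbd⟩
  have n1 : a ≠ c := by rintro rfl; exact had hcd
  have n2 : a ≠ d := by rintro rfl; exact hac hcd.symm
  have n3 : b ≠ c := by rintro rfl; exact hbd hcd
  have n4 : b ≠ d := by rintro rfl; exact hbc hcd.symm
  rw [SimpleGraph.compl_adj] at *
  have hac : (MEbar q).Adj a c := by tauto
  have had : (MEbar q).Adj a d := by tauto
  have hbc : (MEbar q).Adj b c := by tauto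
  have hbd : (MEbar q).Adj b d := by tauto
  obtain ⟨mab, nab⟩ := hab
  obtain ⟨mcd, ncd⟩ := hcd
  have nba : ¬ (MEbar q).Adj b a := fun h => nab h.symm
  have ndc : ¬ (MEbar q).Adj d c := fun h => ncd h.symm
  have : (b ≤ a ∧ c ≤ a ∧ d ≤ a) ∨ (a ≤ b ∧ c ≤ b ∧ d ≤ b) ∨ (d ≤ c ∧ a ≤ c ∧ b ≤ c) ∨
      (c ≤ d ∧ a ≤ d ∧ b ≤ d) := by omega
  rcases this with ⟨x, y, z⟩ | ⟨x, y, z⟩ | ⟨x, y, z⟩ | ⟨x, y, z⟩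
  · exact key_max hq mab mcd ncd hac had hbc hbd x y z
  · exact key_max hq mab.symm mcd ncd hbc hbd hac had x y z
  · exact key_max hq mcd mab nab hac.symm hbc.symm had.symm hbd.symm x y z
  · exact key_max hq mcd.symm mab nab had.symm hbd.symm hac.symm hbc.symm x y z
end

section
/- For every integer q ≥ 2, the clique partition number and the independence number of MEbar_q are equal, and θ(MEbar_q) = α(MEbar_q) = (3q+2)/2 if q is even and (3q+3)/2 if q is odd. -/
/-- `f` describes a partition of the vertices of `G` into at most `k` cliques:
each fibre of `f` is a clique. -/
def IsCliquePartition {V : Type*} (G : SimpleGraph V) {k : ℕ} (f : V → Fin k) : Prop :=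
  ∀ a b : V, f a = f b → a ≠ b → G.Adj a b

/-- A clique partition is frozen if every vertex has a non-neighbour in each clique
of the partition other than the clique containing it. -/
def IsFrozenCliquePartition {V : Type*} (G : SimpleGraph V) {k : ℕ} (f : V → Fin k) : Prop :=
  IsCliquePartition G f ∧ ∀ (v : V) (j : Fin k), j ≠ f v → ∃ w : V, f w = j ∧ ¬ G.Adj v w

/-- The clique partition number `θ(G)`: the least `k` such that the vertices of `G`
can be partitioned into at most `k` cliques. -/
noncomputable def cliquePartNum {V : Type*} (G : SimpleGraph V) : ℕ :=
  sInf {k : ℕ | ∃ f : V → Fin k, IsCliquePartition G f}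

/-- The independence number `α(G)`: the maximum size of an independent set of `G`. -/
noncomputable def indepNum {V : Type*} (G : SimpleGraph V) : ℕ :=
  sSup {n : ℕ | ∃ s : Finset V, s.card = n ∧ ∀ a ∈ s, ∀ b ∈ s, a ≠ b → ¬ G.Adj a b}

theorem card_le_aux {V : Type*} (G : SimpleGraph V) {k : ℕ} (f : V → Fin k)
    (hf : IsCliquePartition G f) (s : Finset V)
    (hs : ∀ a ∈ s, ∀ b ∈ s, a ≠ b → ¬ G.Adj a b) : s.card ≤ k := by
  have h := Finset.card_le_card_of_injOn (s := s) (t := Finset.univ) f (fun _ _ => Finset.mem_coe.2 (Finset.mem_univ _))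
    (by
      intro a ha b hb hab
      by_contra hne
      exact hs a ha b hb hne (hf a b hab hne))
  simpa using h

theorem both_aux {V : Type*} (G : SimpleGraph V) {k : ℕ} (f : V → Fin k)
    (hf : IsCliquePartition G f) (s : Finset V) (hk : s.card = k)
    (hs : ∀ a ∈ s, ∀ b ∈ s, a ≠ b → ¬ G.Adj a b) :
    cliquePartNum G = k ∧ indepNum G = k := by
  constructor
  · apply le_antisymm
    · exact Nat.sInf_le ⟨f, hf⟩
    · refine le_csInf (s := {k : ℕ | ∃ f : V → Fin k, IsCliquePartition G f}) ⟨k, f, hf⟩ ?_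
      rintro n ⟨f', hf'⟩
      rw [← hk]
      exact card_le_aux G f' hf' s hs
  · apply le_antisymm
    · refine csSup_le (s := {n : ℕ | ∃ s : Finset V, s.card = n ∧ ∀ a ∈ s, ∀ b ∈ s, a ≠ b → ¬ G.Adj a b}) ⟨k, s, hk, hs⟩ ?_
      rintro n ⟨s', rfl, hs'⟩
      exact card_le_aux G f hf s' hs'
    · refine le_csSup (s := {n : ℕ | ∃ s : Finset V, s.card = n ∧ ∀ a ∈ s, ∀ b ∈ s, a ≠ b → ¬ G.Adj a b}) ?_ ⟨s, hk, hs⟩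
      refine ⟨k, ?_⟩
      rintro n ⟨s', rfl, hs'⟩
      exact card_le_aux G f hf s' hs'

def IndPred (q x : ℕ) : Prop :=
  (x ≤ q + 1 ∧ x % 2 = 0) ∨ ∃ i, 1 ≤ i ∧ i ≤ q ∧ x = q + 3*i - 1 + i % 2

theorem indPred_rel (q a b : ℕ) (ha : IndPred q a) (hb : IndPred q b)
    (h : b = a + 1 ∨ (a = 0 ∧ b = 4*q+1) ∨
    (∃ i, 1 ≤ i ∧ i ≤ q ∧ a = i ∧ b = q + 3*i) ∨
    (∃ i, 1 ≤ i ∧ i ≤ q ∧ a = q + 3*i - 1 ∧ b = q + 3*i + 1)) : False := by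
  rcases ha with ha | ⟨i, ha⟩ <;> rcases hb with hb | ⟨j, hb⟩ <;>
    rcases h with h | h | ⟨l, h⟩ | ⟨l, h⟩ <;> omega

def fNat (q x : ℕ) : ℕ := if x ≤ q + 1 then x / 2 else (q+3)/2 + (x - q - 2) / 3

def gNat (q j : ℕ) : ℕ := if j < (q+3)/2 then 2 * j else
  q + 3 * (j - (q+3)/2 + 1) - 1 + (j - (q+3)/2 + 1) % 2

theorem gNat_ind (q j : ℕ) (hj : j < q + (q+3)/2) : IndPred q (gNat q j) := by
  unfold gNat IndPred
  split_ifs with h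
  · left; omega
  · right; exact ⟨j - (q+3)/2 + 1, by omega, by omega, rfl⟩

theorem gNat_lt (q j : ℕ) (hq : 2 ≤ q) (hj : j < q + (q+3)/2) : gNat q j < 4*q+2 := by
  unfold gNat
  split_ifs with h <;> omega

theorem fNat_lt (q x : ℕ) (hx : x < 4*q+2) : fNat q x < q + (q+3)/2 := by
  unfold fNat
  split_ifs with h <;> omega

theorem gNat_inj (q i j : ℕ) (h : gNat q i = gNat q j) : i = j := by
  unfold gNat at h
  split_ifs at h <;> omega

theorem fNat_rel (q a b : ℕ) (hb : b < 4*q+2) (hab : a < b) (h : fNat q a = fNat q b) :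
    b = a + 1 ∨ (a = 0 ∧ b = 4*q+1) ∨
    (∃ i, 1 ≤ i ∧ i ≤ q ∧ a = i ∧ b = q + 3*i) ∨
    (∃ i, 1 ≤ i ∧ i ≤ q ∧ a = q + 3*i - 1 ∧ b = q + 3*i + 1) := by
  unfold fNat at h
  by_cases hc : b = a + 1
  · exact Or.inl hc
  · right; right; right
    refine ⟨(a - q - 2) / 3 + 1, ?_⟩
    split_ifs at h <;> omega

theorem stmt7 : ∀ q : ℕ, 2 ≤ q →
    cliquePartNum (MEbar q) = indepNum (MEbar q) ∧
    cliquePartNum (MEbar q) = (if Even q then (3*q+2)/2 else (3*q+3)/2) := by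
  intro q hq
  have key := both_aux (MEbar q) (k := q + (q+3)/2)
    (fun x => ⟨fNat q x.val, fNat_lt q x.val x.isLt⟩)
    (by
      intro a b hab hne
      have hab' : fNat q a.val = fNat q b.val := congrArg Fin.val hab
      rw [MEbar, SimpleGraph.fromRel_adj]
      refine ⟨hne, ?_⟩
      rcases lt_or_gt_of_ne (fun h => hne (Fin.ext h) : a.val ≠ b.val) with h | h
      · exact Or.inl (fNat_rel q _ _ b.isLt h hab')
      · exact Or.inr (fNat_rel q _ _ a.isLt h hab'.symm))
    (Finset.univ.image (fun j : Fin (q + (q+3)/2) =>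
      (⟨gNat q j.val, gNat_lt q j.val hq j.isLt⟩ : Fin (4*q+2))))
    (by
      rw [Finset.card_image_of_injective]
      · simp
      · intro i j h
        exact Fin.ext (gNat_inj q _ _ (congrArg Fin.val h)))
    (by
      intro a ha b hb hne hadj
      obtain ⟨i, -, rfl⟩ := Finset.mem_image.1 ha
      obtain ⟨j, -, rfl⟩ := Finset.mem_image.1 hb
      rw [MEbar, SimpleGraph.fromRel_adj] at hadj
      rcases hadj.2 with h | h
      · exact indPred_rel q _ _ (gNat_ind q _ i.isLt) (gNat_ind q _ j.isLt) h
      · exact indPred_rel q _ _ (gNat_ind q _ j.isLt) (gNat_ind q _ i.isLt) h)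
  refine ⟨key.1.trans key.2.symm, key.1.trans ?_⟩
  split_ifs with h
  · rw [Nat.even_iff] at h; omega
  · rw [Nat.even_iff] at h; omega
end

section
/- For every integer q ≥ 2, the graph MEbar_q admits a frozen (2q+1)-clique-partition. -/
set_option maxHeartbeats 4000000

def fval (q a : ℕ) : ℕ :=
  if a = 0 then 2*q else if a ≤ q then a - 1 else
    if (a-q)%3 = 0 then (a-q)/3 - 1 else q + (a-q)/3

def R (q a b : ℕ) : Prop := b = a + 1 ∨ (a = 0 ∧ b = 4*q+1) ∨
    (1 ≤ a ∧ a ≤ q ∧ b = q + 3*a) ∨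
    (q + 2 ≤ a ∧ a + 2 ≤ 4*q+1 ∧ (a - q) % 3 = 2 ∧ b = a + 2)

lemma adj_iff (q : ℕ) (a b : Fin (4*q+2)) :
    (MEbar q).Adj a b ↔ a.val ≠ b.val ∧ (R q a.val b.val ∨ R q b.val a.val) := by
  have key : ∀ a b : Fin (4*q+2), (b.val = a.val + 1 ∨ (a.val = 0 ∧ b.val = 4*q+1) ∨
    (∃ i, 1 ≤ i ∧ i ≤ q ∧ a.val = i ∧ b.val = q + 3*i) ∨
    (∃ i, 1 ≤ i ∧ i ≤ q ∧ a.val = q + 3*i - 1 ∧ b.val = q + 3*i + 1)) ↔ R q a.val b.val := by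
    intro a b
    unfold R
    constructor
    · rintro (h | h | ⟨i, h⟩ | ⟨i, h⟩) <;> omega
    · rintro (h | h | h | h)
      · exact Or.inl h
      · exact Or.inr (Or.inl h)
      · exact Or.inr (Or.inr (Or.inl ⟨a.val, by omega⟩))
      · exact Or.inr (Or.inr (Or.inr ⟨(a.val - q) / 3 + 1, by omega⟩))
  simp only [MEbar, SimpleGraph.fromRel_adj, key, ne_eq, Fin.ext_iff]

lemma fval_lt (q a : ℕ) (ha : a < 4*q+2) : fval q a < 2*q+1 := by
  unfold fval
  split_ifs <;> omega

lemma fval_eq (q a j : ℕ) (h0 : a = 0 → 2*q = j) (h1 : a ≠ 0 → a ≤ q → a - 1 = j)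
    (h2 : q < a → (a-q)%3 = 0 → (a-q)/3 - 1 = j)
    (h3 : q < a → (a-q)%3 ≠ 0 → q + (a-q)/3 = j) : fval q a = j := by
  unfold fval
  split_ifs with c1 c2 c3
  · exact h0 c1
  · exact h1 c1 c2
  · exact h2 (by omega) c3
  · exact h3 (by omega) c3

lemma pick (q : ℕ) (v : Fin (4*q+2)) (j : ℕ) (x y : ℕ) (hx : x < 4*q+2) (hy : y < 4*q+2)
    (fx : fval q x = j) (fy : fval q y = j)
    (h : ¬ ((v.val ≠ x ∧ (R q v.val x ∨ R q x v.val)) ∧ (v.val ≠ y ∧ (R q v.val y ∨ R q y v.val)))) :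
    ∃ w : Fin (4*q+2), fval q w.val = j ∧ ¬ (MEbar q).Adj v w := by
  by_cases h1 : (v.val ≠ x ∧ (R q v.val x ∨ R q x v.val))
  · exact ⟨⟨y, hy⟩, fy, fun h2 => h ⟨h1, (adj_iff _ _ _).1 h2⟩⟩
  · exact ⟨⟨x, hx⟩, fx, fun h2 => h1 ((adj_iff _ _ _).1 h2)⟩

/-- for every `q ≥ 2`, `MEbar_q` admits a frozen `(2q+1)`-clique-partition. -/
theorem stmt8 : ∀ q : ℕ, 2 ≤ q →
    ∃ f : Fin (4*q+2) → Fin (2*q+1), IsFrozenCliquePartition (MEbar q) f := by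
  intro q hq
  refine ⟨fun a => ⟨fval q a.val, fval_lt q a.val a.isLt⟩, ?_, ?_⟩
  · intro a b hab hne
    rw [adj_iff]
    have hab' : fval q a.val = fval q b.val := by simpa using hab
    have hne' : a.val ≠ b.val := fun h => hne (Fin.ext h)
    have ha := a.isLt
    have hb := b.isLt
    refine ⟨hne', ?_⟩
    generalize a.val = x at *
    generalize b.val = y at *
    unfold fval at hab'
    unfold R
    split_ifs at hab' <;> first
      | (exfalso; omega)
      | (left; right; left; omega)
      | (right; right; left; omega)
      | (left; right; right; left; omega)
      | (right; right; right; left; omega)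
      | (rcases lt_or_gt_of_ne hne' with h | h
         · left; left; omega
         · right; left; omega)
  · intro v j hj
    have hj' : j.val ≠ fval q v.val := fun h => hj (Fin.ext h)
    have hv := v.isLt
    have hjl := j.isLt
    suffices ∃ w : Fin (4*q+2), fval q w.val = j.val ∧ ¬ (MEbar q).Adj v w by
      obtain ⟨w, h1, h2⟩ := this
      exact ⟨w, Fin.ext h1, h2⟩
    clear hj
    generalize j.val = k at *
    rcases lt_trichotomy k (2*q) with h | h | h
    · by_cases hk : k < q
      · apply pick q v k (k+1) (q + 3*(k+1)) (by omega) (by omega)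
          (fval_eq _ _ _ (by omega) (by omega) (by omega) (by omega))
          (fval_eq _ _ _ (by omega) (by omega) (by omega) (by omega))
        generalize v.val = x at *
        rintro ⟨⟨h1, h2⟩, h3, h4⟩
        unfold fval at hj'
        unfold R at h2 h4
        split_ifs at hj' <;> rcases h2 with h2 | h2 <;> rcases h4 with h4 | h4 <;> omega
      · obtain ⟨t, rfl⟩ : ∃ t, k = q + t := ⟨k - q, by omega⟩
        apply pick q v (q+t) (q+1+3*t) (q+2+3*t) (by omega) (by omega)
          (fval_eq _ _ _ (by omega) (by omega) (by omega) (by omega))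
          (fval_eq _ _ _ (by omega) (by omega) (by omega) (by omega))
        generalize v.val = x at *
        rintro ⟨⟨h1, h2⟩, h3, h4⟩
        unfold fval at hj'
        unfold R at h2 h4
        split_ifs at hj' <;> rcases h2 with h2 | h2 <;> rcases h4 with h4 | h4 <;> omega
    · subst h
      apply pick q v (2*q) 0 (4*q+1) (by omega) (by omega)
          (by unfold fval; split_ifs <;> omega) (by unfold fval; split_ifs <;> omega)
      generalize v.val = x at *
      rintro ⟨⟨h1, h2⟩, h3, h4⟩
      unfold fval at hj'
      unfold R at h2 h4
      split_ifs at hj' <;> rcases h2 with h2 | h2 <;> rcases h4 with h4 | h4 <;> omega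
    · omega
end

section
/- For every integer q ≥ 2, the graph ME_q (the complement of MEbar_q) admits a frozen (2q+1)-colouring. -/
/-- A colouring is frozen if every vertex has a neighbour in each colour class
other than its own. -/
def IsFrozenColoring {V : Type*} (G : SimpleGraph V) {k : ℕ} (C : G.Coloring (Fin k)) : Prop :=
  ∀ (v : V) (j : Fin k), j ≠ C v → ∃ w : V, G.Adj v w ∧ C w = j

def meR (q a b : ℕ) : Prop :=
  b = a + 1 ∨ (a = 0 ∧ b = 4*q+1) ∨ (1 ≤ a ∧ a ≤ q ∧ b = q + 3*a) ∨
    (q + 2 ≤ a ∧ (a - (q+2)) % 3 = 0 ∧ a ≤ 4*q-1 ∧ b = a + 2)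

def meC (q a : ℕ) : ℕ :=
  if a = 0 then 2*q else if a ≤ q then a - 1 else
    if (a - (q+1)) % 3 = 2 then (a - (q+1)) / 3 else q + (a - q) / 3

theorem me_adj (q : ℕ) (a b : Fin (4*q+2)) :
    (MEbar q)ᶜ.Adj a b ↔ a.val ≠ b.val ∧ ¬ meR q a.val b.val ∧ ¬ meR q b.val a.val := by
  have key : ∀ a b : ℕ, (b = a + 1 ∨ (a = 0 ∧ b = 4*q+1) ∨
    (∃ i, 1 ≤ i ∧ i ≤ q ∧ a = i ∧ b = q + 3*i) ∨
    (∃ i, 1 ≤ i ∧ i ≤ q ∧ a = q + 3*i - 1 ∧ b = q + 3*i + 1)) ↔ meR q a b := by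
    intro a b
    unfold meR
    constructor
    · rintro (h | h | ⟨i, h⟩ | ⟨i, h⟩) <;> omega
    · rintro (h | h | h | h)
      · exact Or.inl h
      · exact Or.inr (Or.inl h)
      · exact Or.inr (Or.inr (Or.inl ⟨a, by omega⟩))
      · exact Or.inr (Or.inr (Or.inr ⟨(a - (q+2)) / 3 + 1, by omega⟩))
  rw [SimpleGraph.compl_adj, MEbar, SimpleGraph.fromRel_adj, key, key, ne_eq, Fin.ext_iff]
  tauto

theorem me_lt (q a : ℕ) (hq : 2 ≤ q) (ha : a < 4*q+2) : meC q a < 2*q+1 := by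
  unfold meC; split_ifs <;> omega

theorem me_spec (q a c : ℕ) : meC q a = c ↔ (a = 0 ∧ c = 2*q) ∨ (1 ≤ a ∧ a ≤ q ∧ c + 1 = a) ∨
    (q < a ∧ a = q + 3*c + 3) ∨ (q < a ∧ a + 2*q = 3*c + 1) ∨ (q < a ∧ a + 2*q = 3*c + 2) := by
  unfold meC
  split_ifs <;> omega

theorem me_proper (q a b : ℕ) (hq : 2 ≤ q) (ha : a < 4*q+2) (hb : b < 4*q+2)
    (hne : a ≠ b) (h1 : ¬ meR q a b) (h2 : ¬ meR q b a) : meC q a ≠ meC q b := by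
  intro h
  have hb := (me_spec q b _).mp rfl
  rw [me_spec] at h
  generalize meC q b = c at *
  have : meR q a b ∨ meR q b a := by
    clear h1 h2
    unfold meR
    rcases h with h | h | h | h | h <;> rcases hb with hb | hb | hb | hb | hb <;> omega
  tauto

theorem me_frozen (q a j : ℕ) (hq : 2 ≤ q) (ha : a < 4*q+2) (hj : j < 2*q+1)
    (hne : j ≠ meC q a) :
    ∃ b, b < 4*q+2 ∧ (a ≠ b ∧ ¬ meR q a b ∧ ¬ meR q b a) ∧ meC q b = j := by
  have key : ∃ x y, x < 4*q+2 ∧ y < 4*q+2 ∧ meC q x = j ∧ meC q y = j ∧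
      ((j < q ∧ x = j+1 ∧ y = q+3*j+3) ∨ 
       (q ≤ j ∧ j < 2*q ∧ x = q+3*(j-q)+1 ∧ y = x + 1) ∨
       (j = 2*q ∧ x = 4*q+1 ∧ y = 0)) := by
    rcases lt_or_ge j q with h | h
    · refine ⟨j+1, q+3*j+3, by omega, by omega, ?_, ?_, by omega⟩ <;>
        (rw [me_spec]; clear hne; omega)
    · rcases lt_or_ge j (2*q) with h' | h'
      · refine ⟨q+3*(j-q)+1, q+3*(j-q)+1+1, by omega, by omega, ?_, ?_, by omega⟩ <;>
        (rw [me_spec]; clear hne; omega)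
      · refine ⟨4*q+1, 0, by omega, by omega, ?_, ?_, by omega⟩ <;>
        (rw [me_spec]; clear hne; omega)
  obtain ⟨x, y, hx, hy, cx, cy, h⟩ := key
  have hax : a ≠ x := by rintro rfl; exact hne cx.symm
  have hay : a ≠ y := by rintro rfl; exact hne cy.symm
  by_cases h1 : meR q a x ∨ meR q x a
  · refine ⟨y, hy, ⟨hay, ?_⟩, cy⟩
    clear cx cy hne
    unfold meR at *
    rcases h with h | h | h <;> rcases h1 with (h1 | h1 | h1 | h1) | (h1 | h1 | h1 | h1) <;> omega
  · exact ⟨x, hx, ⟨hax, by tauto⟩, cx⟩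

/-- for every `q ≥ 2`, `ME_q` (the complement of `MEbar_q`) admits a
frozen `(2q+1)`-colouring. -/
theorem stmt9 : ∀ q : ℕ, 2 ≤ q →
    ∃ C : ((MEbar q)ᶜ).Coloring (Fin (2*q+1)), IsFrozenColoring (MEbar q)ᶜ C := by
  intro q hq
  refine ⟨SimpleGraph.Coloring.mk (fun a => ⟨meC q a.val, me_lt q a.val hq a.isLt⟩) ?_, ?_⟩
  · intro a b hab h
    rw [me_adj] at hab
    exact me_proper q a.val b.val hq a.isLt b.isLt hab.1 hab.2.1 hab.2.2 (Fin.ext_iff.mp h)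
  · intro v j hj
    obtain ⟨b, hb, hab, hc⟩ := me_frozen q v.val j.val hq v.isLt j.isLt
      (fun h => hj (Fin.ext h))
    exact ⟨⟨b, hb⟩, (me_adj q v ⟨b, hb⟩).mpr hab, Fin.ext hc⟩
end

section
/- For every integer q ≥ 2, the graph MEbarStar_q admits a frozen (2q+1)-clique-partition. -/
/-- `MEbarStar_q` is `MEbar_q` together with the edge `u_0 u_{q+1}`. -/
def MEbarStar (q : ℕ) : SimpleGraph (Fin (4*q+2)) :=
  MEbar q ⊔ SimpleGraph.fromRel (fun a b => a.val = 0 ∧ b.val = q+1)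

def R12 (q a b : ℕ) : Prop :=
  b = a + 1 ∨ (a = 0 ∧ b = 4*q+1) ∨ (1 ≤ a ∧ a ≤ q ∧ b = q + 3*a) ∨
  (q + 2 ≤ a ∧ b ≤ 4*q+1 ∧ b = a + 2 ∧ (a + 1 - q) % 3 = 0) ∨ (a = 0 ∧ b = q+1)

lemma adj12 (q : ℕ) (a b : Fin (4*q+2)) :
    (MEbarStar q).Adj a b ↔ a.val ≠ b.val ∧ (R12 q a.val b.val ∨ R12 q b.val a.val) := by
  have key : ∀ x y : ℕ, (y = x + 1 ∨ (x = 0 ∧ y = 4*q+1) ∨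
    (∃ i, 1 ≤ i ∧ i ≤ q ∧ x = i ∧ y = q + 3*i) ∨
    (∃ i, 1 ≤ i ∧ i ≤ q ∧ x = q + 3*i - 1 ∧ y = q + 3*i + 1)) ∨ (x = 0 ∧ y = q+1)
      ↔ R12 q x y := by
    intro x y
    unfold R12
    constructor
    · rintro ((h | h | ⟨i, h⟩ | ⟨i, h⟩) | h) <;> omega
    · rintro (h | h | h | h | h)
      · exact Or.inl (Or.inl h)
      · exact Or.inl (Or.inr (Or.inl h))
      · exact Or.inl (Or.inr (Or.inr (Or.inl ⟨x, by omega⟩)))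
      · exact Or.inl (Or.inr (Or.inr (Or.inr ⟨(x + 1 - q) / 3, by omega⟩)))
      · exact Or.inr h
  rw [← key, ← key]
  simp only [MEbarStar, MEbar, SimpleGraph.sup_adj, SimpleGraph.fromRel_adj, ne_eq, Fin.ext_iff]
  rw [← and_or_left]
  exact and_congr_right fun _ => or_or_or_comm

def f12 (q a : ℕ) : ℕ :=
  if a = 0 ∨ a = 4*q+1 then 0 else if a ≤ q then a else
  if (a - q) % 3 = 0 then (a - q) / 3 else q + 1 + (a - q) / 3

lemma f12_lt (q a : ℕ) (ha : a < 4*q+2) : f12 q a < 2*q+1 := by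
  unfold f12; split_ifs <;> omega

lemma clique12 (q a b : ℕ) (ha : a < 4*q+2) (hb : b < 4*q+2)
    (h : f12 q a = f12 q b) (hab : a ≠ b) : R12 q a b ∨ R12 q b a := by
  unfold f12 at h; unfold R12
  split_ifs at h
  all_goals first
    | (exfalso; omega)
    | (left; left; omega)
    | (right; left; omega)
    | (left; right; left; omega)
    | (right; right; left; omega)
    | (left; right; right; left; omega)
    | (right; right; right; left; omega)
    | (rcases Nat.lt_or_gt_of_ne hab with h' | h'
       · left; left; omega
       · right; left; omega)
    | (rcases Nat.lt_or_gt_of_ne hab with h' | h'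
       · left; right; left; omega
       · right; right; left; omega)
    | skip

set_option maxHeartbeats 4000000 in
lemma frozen12 (q v x y : ℕ) (hq : 2 ≤ q) (hv : v < 4*q+2)
    (hxy : (x = 0 ∧ y = 4*q+1) ∨ (1 ≤ x ∧ x ≤ q ∧ y = q + 3*x) ∨
      (q + 1 ≤ x ∧ x < 4*q ∧ y = x + 1 ∧ (x - q) % 3 = 1))
    (h1 : R12 q v x ∨ R12 q x v) (h2 : R12 q v y ∨ R12 q y v) : v = x ∨ v = y := by
  unfold R12 at h1 h2
  rcases hxy with h | h | h <;> rcases h1 with (h1|h1|h1|h1|h1)|(h1|h1|h1|h1|h1) <;>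
    rcases h2 with (h2|h2|h2|h2|h2)|(h2|h2|h2|h2|h2) <;> omega

lemma pair12 (q j : ℕ) (hq : 2 ≤ q) (hj : j < 2*q+1) : ∃ x y, x < 4*q+2 ∧ y < 4*q+2 ∧
    f12 q x = j ∧ f12 q y = j ∧ ((x = 0 ∧ y = 4*q+1) ∨ (1 ≤ x ∧ x ≤ q ∧ y = q + 3*x) ∨
      (q + 1 ≤ x ∧ x < 4*q ∧ y = x + 1 ∧ (x - q) % 3 = 1)) := by
  rcases Nat.eq_zero_or_pos j with h | h
  · refine ⟨0, 4*q+1, by omega, by omega, ?_, ?_, by omega⟩ <;> simp [f12, h]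
  · by_cases h' : j ≤ q
    · refine ⟨j, q+3*j, by omega, by omega, ?_, ?_, by omega⟩ <;> unfold f12 <;> split_ifs <;> omega
    · obtain ⟨m, rfl⟩ : ∃ m, j = q + 1 + m := ⟨j - (q+1), by omega⟩
      refine ⟨q+3*m+1, q+3*m+2, by omega, by omega, ?_, ?_, by omega⟩ <;>
        unfold f12 <;> rw [if_neg (by omega), if_neg (by omega), if_neg (by omega)] <;> omega

/-- for every `q ≥ 2`, `MEbarStar_q` admits a frozen
`(2q+1)`-clique-partition. -/
theorem stmt12 : ∀ q : ℕ, 2 ≤ q →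
    ∃ f : Fin (4*q+2) → Fin (2*q+1), IsFrozenCliquePartition (MEbarStar q) f := by
  intro q hq
  refine ⟨fun a => ⟨f12 q a.val, f12_lt q a.val a.isLt⟩, ?_, ?_⟩
  · intro a b h hab
    have hab' : a.val ≠ b.val := fun e => hab (Fin.ext e)
    exact (adj12 q a b).2 ⟨hab', clique12 q _ _ a.isLt b.isLt (Fin.ext_iff.1 h) hab'⟩
  · intro v j hj
    obtain ⟨x, y, hx, hy, fx, fy, hxy⟩ := pair12 q j.val hq j.isLt
    by_contra hc
    push Not at hc
    have h1 := ((adj12 q _ _).1 (hc ⟨x, hx⟩ (Fin.ext fx))).2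
    have h2 := ((adj12 q _ _).1 (hc ⟨y, hy⟩ (Fin.ext fy))).2
    apply hj
    apply Fin.ext
    rcases frozen12 q v.val x y hq v.isLt hxy h1 h2 with e | e
    · simp only [e, fx]
    · simp only [e, fy]
end

section
/- For every integer q ≥ 2, the graph KMbar_q is C4-free. -/
/-- `KMbar_q` is `MEbar_q` with the edges `u_1u_2, u_2u_3, …, u_{q-1}u_q` deleted. -/
def KMbar (q : ℕ) : SimpleGraph (Fin (4*q+2)) :=
  MEbar q \ SimpleGraph.fromRel (fun a b => ∃ i, 1 ≤ i ∧ i ≤ q - 1 ∧ a.val = i ∧ b.val = i+1)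

/-- Oriented edges of `KMbar q`, from the smaller to the larger vertex. -/
def DD (q a b : ℕ) : Prop :=
  (b = a + 1 ∧ (a = 0 ∨ q ≤ a)) ∨ (a = 0 ∧ b = 4*q+1) ∨
    (1 ≤ a ∧ a ≤ q ∧ b = q + 3*a) ∨ (∃ i, 1 ≤ i ∧ i ≤ q ∧ a + 1 = q + 3*i ∧ b = q + 3*i + 1)

theorem DD_lt {q a b : ℕ} (h : DD q a b) : a < b := by
  rcases h with h | h | h | ⟨i, h⟩ <;> omega

theorem adj_DD {q : ℕ} {a b : Fin (4*q+2)} (h : (KMbar q).Adj a b) :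
    DD q a.val b.val ∨ DD q b.val a.val := by
  have key : ∀ a b : Fin (4*q+2), a ≠ b → (b.val = a.val + 1 ∨ (a.val = 0 ∧ b.val = 4*q+1) ∨
    (∃ i, 1 ≤ i ∧ i ≤ q ∧ a.val = i ∧ b.val = q + 3*i) ∨
    (∃ i, 1 ≤ i ∧ i ≤ q ∧ a.val = q + 3*i - 1 ∧ b.val = q + 3*i + 1)) →
    (¬ ∃ i, 1 ≤ i ∧ i ≤ q - 1 ∧ a.val = i ∧ b.val = i+1) → DD q a.val b.val := by
    intro a b _ h hn
    rcases h with h | h | ⟨i, h⟩ | ⟨i, h⟩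
    · refine Or.inl ⟨h, ?_⟩
      by_contra hc
      exact hn ⟨a.val, by omega, by omega, rfl, h⟩
    · exact Or.inr (Or.inl h)
    · exact Or.inr (Or.inr (Or.inl (by omega)))
    · exact Or.inr (Or.inr (Or.inr ⟨i, by omega⟩))
  simp only [KMbar, MEbar, SimpleGraph.sdiff_adj, SimpleGraph.fromRel_adj] at h
  obtain ⟨⟨hne, h⟩, hn⟩ := h
  rcases h with h | h
  · exact Or.inl (key a b hne h fun h' => hn ⟨hne, Or.inl h'⟩)
  · exact Or.inr (key b a hne.symm h fun h' => hn ⟨hne, Or.inr h'⟩)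

theorem core {q a b c d : ℕ} (hq : 2 ≤ q) (hbd : b < d) (hca : c < a)
    (h1 : DD q b a) (h2 : DD q d a) (h3 : DD q b c ∨ DD q c b) (h4 : DD q d c ∨ DD q c d) :
    False := by
  rcases h1 with h1 | h1 | h1 | ⟨i, h1⟩ <;> rcases h2 with h2 | h2 | h2 | ⟨j, h2⟩ <;>
    first
    | omega
    | (rcases h3 with (h3 | h3 | h3 | ⟨k, h3⟩) | (h3 | h3 | h3 | ⟨k, h3⟩) <;>
        first
        | omega
        | (rcases h4 with (h4 | h4 | h4 | ⟨l, h4⟩) | (h4 | h4 | h4 | ⟨l, h4⟩) <;> omega))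

theorem core2 {q a b c d : ℕ} (hq : 2 ≤ q) (hac : a ≠ c) (hbd : b ≠ d)
    (hba : b ≤ a) (hca : c ≤ a) (hda : d ≤ a)
    (h1 : DD q a b ∨ DD q b a) (h2 : DD q b c ∨ DD q c b) (h3 : DD q c d ∨ DD q d c)
    (h4 : DD q d a ∨ DD q a d) : False := by
  have h1' : DD q b a := h1.resolve_left fun h => by have := DD_lt h; omega
  have h4' : DD q d a := h4.resolve_right fun h => by have := DD_lt h; omega
  rcases lt_or_gt_of_ne hbd with h | h
  · exact core hq h (by omega) h1' h4' h2 h3.symm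
  · exact core hq h (by omega) h4' h1' h3.symm h2

/-- for every `q ≥ 2`, the graph `KMbar_q` is `C₄`-free. -/
theorem stmt13 : ∀ q : ℕ, 2 ≤ q → C4Free (KMbar q) := by
  rintro q hq ⟨a, b, c, d, hac, hbd, h1, h2, h3, h4, -, -⟩
  have hac : a.val ≠ c.val := fun h => hac (Fin.ext h)
  have hbd : b.val ≠ d.val := fun h => hbd (Fin.ext h)
  have e1 := adj_DD h1
  have e2 := adj_DD h2
  have e3 := adj_DD h3
  have e4 := adj_DD h4
  have : (b.val ≤ a.val ∧ c.val ≤ a.val ∧ d.val ≤ a.val) ∨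
    (c.val ≤ b.val ∧ d.val ≤ b.val ∧ a.val ≤ b.val) ∨
    (d.val ≤ c.val ∧ a.val ≤ c.val ∧ b.val ≤ c.val) ∨
    (a.val ≤ d.val ∧ b.val ≤ d.val ∧ c.val ≤ d.val) := by omega
  rcases this with ⟨x, y, z⟩ | ⟨x, y, z⟩ | ⟨x, y, z⟩ | ⟨x, y, z⟩
  · exact core2 hq hac hbd x y z e1 e2 e3 e4
  · exact core2 hq hbd hac.symm x y z e2 e3 e4 e1
  · exact core2 hq hac.symm hbd.symm x y z e3 e4 e1 e2
  · exact core2 hq hbd.symm hac x y z e4 e1 e2 e3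
end

section
/- Let H be a finite simple graph with a k-clique-partition Q and a frozen (k+1)-clique-partition F, and let x and y be adjacent vertices of H which lie in different cliques of Q such that either (1) x and y lie in different cliques of F, or (2) {x,y} is a clique of F. Let H′ be obtained from H by subdividing the edge xy (deleting xy, adding new vertices u, v, and adding the edges xu, uv, vy). Then H′ is (k+1)-clique-partitionable and admits a frozen (k+2)-clique-partition. Furthermore: (3) if θ(H) = k, then θ(H′) = k+1; and (4) if H is C4-free and, in case (1), xy is not the middle edge of a diamond in H, then H′ is C4-free. -/
/-- The graph obtained from `H` by subdividing the edge `xy`: the edge `xy` is deleted,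
two new vertices `u = Sum.inr 0` and `v = Sum.inr 1` are added, together with the
edges `xu`, `uv`, `vy`. -/
def subdivide {V : Type*} (H : SimpleGraph V) (x y : V) : SimpleGraph (V ⊕ Fin 2) :=
  SimpleGraph.fromRel (fun p q =>
    (∃ a b : V, p = Sum.inl a ∧ q = Sum.inl b ∧ H.Adj a b ∧
      ¬(a = x ∧ b = y) ∧ ¬(a = y ∧ b = x)) ∨
    (p = Sum.inl x ∧ q = Sum.inr 0) ∨
    (p = Sum.inr 0 ∧ q = Sum.inr 1) ∨
    (p = Sum.inr 1 ∧ q = Sum.inl y))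

theorem sub_ll {V : Type*} (H : SimpleGraph V) (x y a b : V) :
    (subdivide H x y).Adj (Sum.inl a) (Sum.inl b) ↔
      H.Adj a b ∧ ¬(a = x ∧ b = y) ∧ ¬(a = y ∧ b = x) := by
  have h1 : H.Adj a b → a ≠ b := fun h => h.ne
  have h2 : H.Adj a b ↔ H.Adj b a := H.adj_comm a b
  simp [subdivide, SimpleGraph.fromRel_adj]
  tauto

theorem sub_l0 {V : Type*} (H : SimpleGraph V) (x y a : V) :
    (subdivide H x y).Adj (Sum.inl a) (Sum.inr 0) ↔ a = x := by
  simp [subdivide, SimpleGraph.fromRel_adj]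

theorem sub_0l {V : Type*} (H : SimpleGraph V) (x y a : V) :
    (subdivide H x y).Adj (Sum.inr 0) (Sum.inl a) ↔ a = x := by
  rw [SimpleGraph.adj_comm, sub_l0]

theorem sub_l1 {V : Type*} (H : SimpleGraph V) (x y a : V) :
    (subdivide H x y).Adj (Sum.inl a) (Sum.inr 1) ↔ a = y := by
  simp [subdivide, SimpleGraph.fromRel_adj]

theorem sub_1l {V : Type*} (H : SimpleGraph V) (x y a : V) :
    (subdivide H x y).Adj (Sum.inr 1) (Sum.inl a) ↔ a = y := by
  rw [SimpleGraph.adj_comm, sub_l1]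

theorem sub_01 {V : Type*} (H : SimpleGraph V) (x y : V) :
    (subdivide H x y).Adj (Sum.inr 0) (Sum.inr 1) := by
  simp [subdivide, SimpleGraph.fromRel_adj]

theorem sub_10 {V : Type*} (H : SimpleGraph V) (x y : V) :
    (subdivide H x y).Adj (Sum.inr 1) (Sum.inr 0) := (sub_01 H x y).symm

theorem vcases {V : Type*} {P : V ⊕ Fin 2 → Prop} (hl : ∀ a, P (Sum.inl a))
    (h0 : P (Sum.inr 0)) (h1 : P (Sum.inr 1)) : ∀ p, P p := by
  rintro (a | i)
  · exact hl a
  · fin_cases i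
    · exact h0
    · exact h1

/-- extend a partition by the clique formed by the two new vertices -/
def extPart {V : Type*} {m : ℕ} (f : V → Fin m) : V ⊕ Fin 2 → Fin (m + 1) :=
  Sum.elim (fun a => (f a).castSucc) (fun _ => Fin.last m)

theorem extPart_clique {V : Type*} {m : ℕ} (H : SimpleGraph V) (x y : V) (f : V → Fin m)
    (hf : IsCliquePartition H f) (hne : f x ≠ f y) :
    IsCliquePartition (subdivide H x y) (extPart f) := by
  refine vcases ?_ ?_ ?_
  · intro a
    refine vcases ?_ ?_ ?_
    · intro b hab hn
      have hab' : f a = f b := by simpa [extPart] using hab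
      rw [sub_ll]
      refine ⟨hf a b hab' (fun h => hn (by rw [h])), ?_, ?_⟩
      · rintro ⟨rfl, rfl⟩; exact hne hab'
      · rintro ⟨rfl, rfl⟩; exact hne hab'.symm
    · intro h; exact absurd h (Fin.castSucc_lt_last _).ne
    · intro h; exact absurd h (Fin.castSucc_lt_last _).ne
  · refine vcases ?_ ?_ ?_
    · intro b h; exact absurd h (Fin.castSucc_lt_last _).ne'
    · intro _ h; exact absurd rfl h
    · intro _ _; exact sub_01 H x y
  · refine vcases ?_ ?_ ?_
    · intro b h; exact absurd h (Fin.castSucc_lt_last _).ne'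
    · intro _ _; exact sub_10 H x y
    · intro _ h; exact absurd rfl h

theorem extPart_frozen {V : Type*} {m : ℕ} (H : SimpleGraph V) (x y : V) (hxy : H.Adj x y)
    (F : V → Fin m) (hF : IsFrozenCliquePartition H F) (hne : F x ≠ F y) :
    IsFrozenCliquePartition (subdivide H x y) (extPart F) := by
  refine ⟨extPart_clique H x y F hF.1 hne, vcases ?_ ?_ ?_⟩
  · intro a j
    refine Fin.lastCases ?_ (fun j => ?_) j
    · intro _
      by_cases h : a = x
      · refine ⟨Sum.inr 1, rfl, ?_⟩
        rw [sub_l1, h]; exact hxy.ne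
      · refine ⟨Sum.inr 0, rfl, ?_⟩
        rw [sub_l0]; exact h
    · intro h
      obtain ⟨w, hw, hw'⟩ := hF.2 a j (fun h' => h (by rw [h']; rfl))
      refine ⟨Sum.inl w, by rw [← hw]; rfl, ?_⟩
      rw [sub_ll]; tauto
  · intro j
    refine Fin.lastCases ?_ (fun j => ?_) j
    · intro h; exact absurd rfl h
    · intro _
      by_cases h : j = F x
      · obtain ⟨w, hw, hw'⟩ := hF.2 y j (by rw [h]; exact hne)
        refine ⟨Sum.inl w, by rw [← hw]; rfl, ?_⟩
        rw [sub_0l]; rintro rfl; exact hw' hxy.symm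
      · obtain ⟨w, hw, hw'⟩ := hF.2 x j h
        refine ⟨Sum.inl w, by rw [← hw]; rfl, ?_⟩
        rw [sub_0l]; rintro rfl; exact h hw.symm
  · intro j
    refine Fin.lastCases ?_ (fun j => ?_) j
    · intro h; exact absurd rfl h
    · intro _
      by_cases h : j = F y
      · obtain ⟨w, hw, hw'⟩ := hF.2 x j (by rw [h]; exact hne.symm)
        refine ⟨Sum.inl w, by rw [← hw]; rfl, ?_⟩
        rw [sub_1l]; rintro rfl; exact hw' hxy
      · obtain ⟨w, hw, hw'⟩ := hF.2 y j h
        refine ⟨Sum.inl w, by rw [← hw]; rfl, ?_⟩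
        rw [sub_1l]; rintro rfl; exact h hw.symm

/-- split the clique `{x,y}` into `{x,u}` and `{v,y}` -/
def splitPart {V : Type*} [DecidableEq V] {m : ℕ} (F : V → Fin m) (x y : V) :
    V ⊕ Fin 2 → Fin (m + 1) :=
  Sum.elim (fun a => if a = y then Fin.last m else (F a).castSucc)
    (fun i => if i = 0 then (F x).castSucc else Fin.last m)

theorem splitPart_frozen {V : Type*} [DecidableEq V] {m : ℕ} (H : SimpleGraph V) (x y : V)
    (hxy : H.Adj x y) (F : V → Fin m) (hF : IsFrozenCliquePartition H F) (he : F x = F y)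
    (hc : ∀ z : V, F z = F x → z = x ∨ z = y) :
    IsFrozenCliquePartition (subdivide H x y) (splitPart F x y) := by
  have hn := hxy.ne
  have ey : splitPart F x y (Sum.inl y) = Fin.last m := by simp [splitPart]
  have ea : ∀ a, a ≠ y → splitPart F x y (Sum.inl a) = (F a).castSucc := by
    intro a h; simp [splitPart, h]
  have e0 : splitPart F x y (Sum.inr 0) = (F x).castSucc := by simp [splitPart]
  have e1 : splitPart F x y (Sum.inr 1) = Fin.last m := by simp [splitPart]
  have nl : ∀ j : Fin m, j.castSucc ≠ Fin.last m := fun j => (Fin.castSucc_lt_last j).ne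
  refine ⟨?_, ?_⟩
  · refine vcases ?_ ?_ ?_
    · intro a
      refine vcases ?_ ?_ ?_
      · intro b hab hnab
        have hab' : a ≠ b := fun h => hnab (by rw [h])
        by_cases h1 : a = y
        · subst h1
          rw [ey, ea b hab'.symm] at hab
          exact absurd hab.symm (nl _)
        · by_cases h2 : b = y
          · subst h2
            rw [ey, ea a hab'] at hab
            exact absurd hab (nl _)
          · rw [ea a h1, ea b h2] at hab
            rw [sub_ll]
            exact ⟨hF.1 a b (Fin.castSucc_injective _ hab) hab', by tauto, by tauto⟩
      · intro h _
        by_cases h1 : a = y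
        · subst h1; rw [ey, e0] at h; exact absurd h.symm (nl _)
        · rw [ea a h1, e0] at h
          rw [sub_l0]
          exact (hc a (Fin.castSucc_injective _ h)).resolve_right h1
      · intro h _
        rw [sub_l1]
        by_contra h1
        rw [ea a h1, e1] at h; exact nl _ h
    · refine vcases ?_ ?_ ?_
      · intro a h _
        by_cases h1 : a = y
        · subst h1; rw [ey, e0] at h; exact absurd h (nl _)
        · rw [ea a h1, e0] at h
          rw [sub_0l]
          exact (hc a (Fin.castSucc_injective _ h.symm)).resolve_right h1
      · intro _ h; exact absurd rfl h
      · intro _ _; exact sub_01 H x y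
    · refine vcases ?_ ?_ ?_
      · intro a h _
        rw [sub_1l]
        by_contra h1
        rw [ea a h1, e1] at h; exact nl _ h.symm
      · intro _ _; exact sub_10 H x y
      · intro _ h; exact absurd rfl h
  · refine vcases ?_ ?_ ?_
    · intro a j
      refine Fin.lastCases ?_ (fun j => ?_) j
      · intro h
        have h1 : a ≠ y := by rintro rfl; exact h ey.symm
        exact ⟨Sum.inr 1, e1, by rw [sub_l1]; exact h1⟩
      · intro h
        by_cases hj : j = F x
        · subst hj
          refine ⟨Sum.inr 0, e0, ?_⟩
          rw [sub_l0]; rintro rfl; exact h (ea _ hn).symm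
        · have h1 : j ≠ F a := by
            rintro rfl
            by_cases h1 : a = y
            · subst h1; exact hj he.symm
            · exact h (ea a h1).symm
          obtain ⟨w, hw, hw'⟩ := hF.2 a j h1
          refine ⟨Sum.inl w, ?_, ?_⟩
          · rw [ea w, hw]
            rintro rfl; exact hj (hw.symm.trans he.symm)
          · rw [sub_ll]; tauto
    · intro j
      refine Fin.lastCases ?_ (fun j => ?_) j
      · intro _; exact ⟨Sum.inl y, ey, by rw [sub_0l]; exact hn.symm⟩
      · intro h
        have hj : j ≠ F x := by rintro rfl; exact h e0.symm
        obtain ⟨w, hw, hw'⟩ := hF.2 x j hj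
        refine ⟨Sum.inl w, ?_, ?_⟩
        · rw [ea w, hw]
          rintro rfl; exact hj (hw.symm.trans he.symm)
        · rw [sub_0l]; rintro rfl; exact hj hw.symm
    · intro j
      refine Fin.lastCases ?_ (fun j => ?_) j
      · intro h; exact absurd e1.symm h
      · intro h
        by_cases hj : j = F x
        · subst hj; exact ⟨Sum.inl x, ea x hn, by rw [sub_1l]; exact hn⟩
        · obtain ⟨w, hw, hw'⟩ := hF.2 x j hj
          refine ⟨Sum.inl w, ?_, ?_⟩
          · rw [ea w, hw]
            rintro rfl; exact hj (hw.symm.trans he.symm)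
          · rw [sub_1l]; rintro rfl; exact hj (hw.symm.trans he.symm)

theorem reduce_part {V : Type*} (H : SimpleGraph V) (x y : V) (hxy : H.Adj x y) (n : ℕ)
    (g : V ⊕ Fin 2 → Fin (n + 1)) (hg : IsCliquePartition (subdivide H x y) g) :
    ∃ h : V → Fin n, IsCliquePartition H h := by
  have gu : ∀ a, g (Sum.inl a) = g (Sum.inr 0) → a = x := fun a h =>
    (sub_l0 H x y a).1 (hg _ _ h (by simp))
  have gv : ∀ a, g (Sum.inl a) = g (Sum.inr 1) → a = y := fun a h =>
    (sub_l1 H x y a).1 (hg _ _ h (by simp))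
  have hll : ∀ a b, g (Sum.inl a) = g (Sum.inl b) → a ≠ b → H.Adj a b := fun a b h hn =>
    ((sub_ll H x y a b).1 (hg _ _ h (by simpa using hn))).1
  have key : ∀ a, ∃ i : Fin n, (g (Sum.inr 1)).succAbove i =
      if g (Sum.inl a) = g (Sum.inr 1) then g (Sum.inr 0) else g (Sum.inl a) := by
    intro a
    apply Fin.exists_succAbove_eq
    split_ifs with h
    · intro h'
      exact hxy.ne ((gu a (h.trans h'.symm)).symm.trans (gv a h))
    · exact h
  choose h hh using key
  refine ⟨h, fun a b hab hn => ?_⟩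
  have := hh a
  rw [hab, hh b] at this
  split_ifs at this with h1 h2 h2
  · exact absurd ((gv a h2).trans (gv b h1).symm) hn
  · rw [gu a this.symm, gv b h1]; exact hxy
  · rw [gu b this, gv a h2]; exact hxy.symm
  · exact hll a b this.symm hn

theorem sub_C4 {V : Type*} (H : SimpleGraph V) (x y : V) (hxy : H.Adj x y)
    (hC : C4Free H)
    (hd : ¬ ∃ r s : V, r ≠ s ∧ ¬ H.Adj r s ∧ H.Adj r x ∧ H.Adj r y ∧ H.Adj s x ∧ H.Adj s y) :
    C4Free (subdivide H x y) := by
  have hn := hxy.ne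
  -- neighbours of the new vertices
  have n0 : ∀ p, (subdivide H x y).Adj (Sum.inr 0) p → p = Sum.inl x ∨ p = Sum.inr 1 := by
    refine vcases ?_ ?_ ?_
    · intro a h; left; rw [(sub_0l H x y a).1 h]
    · intro h; exact absurd rfl h.ne
    · intro _; right; rfl
  have n1 : ∀ p, (subdivide H x y).Adj (Sum.inr 1) p → p = Sum.inl y ∨ p = Sum.inr 0 := by
    refine vcases ?_ ?_ ?_
    · intro a h; left; rw [(sub_1l H x y a).1 h]
    · intro _; right; rfl
    · intro h; exact absurd rfl h.ne
  have nc : ∀ p, (subdivide H x y).Adj (Sum.inl x) p → (subdivide H x y).Adj (Sum.inr 1) p →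
      p = Sum.inr 0 := by
    intro p h1 h2
    rcases n1 p h2 with rfl | rfl
    · rw [sub_ll] at h1; tauto
    · rfl
  have nd : ∀ p, (subdivide H x y).Adj (Sum.inl y) p → (subdivide H x y).Adj (Sum.inr 0) p →
      p = Sum.inr 1 := by
    intro p h1 h2
    rcases n0 p h2 with rfl | rfl
    · rw [sub_ll] at h1; tauto
    · rfl
  -- no four-cycle has a new vertex
  have old : ∀ a b c d, a ≠ c → b ≠ d → (subdivide H x y).Adj a b → (subdivide H x y).Adj b c →
      (subdivide H x y).Adj c d → (subdivide H x y).Adj d a → ∃ a', a = Sum.inl a' := by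
    refine vcases ?_ ?_ ?_
    · intro a b c d _ _ _ _ _ _; exact ⟨a, rfl⟩
    · intro b c d hac hbd h1 h2 h3 h4
      rcases n0 b h1 with rfl | rfl <;> rcases n0 d h4.symm with rfl | rfl
      · exact absurd rfl hbd
      · exact absurd (nc c h2 h3.symm).symm hac
      · exact absurd (nc c h3.symm h2).symm hac
      · exact absurd rfl hbd
    · intro b c d hac hbd h1 h2 h3 h4
      rcases n1 b h1 with rfl | rfl <;> rcases n1 d h4.symm with rfl | rfl
      · exact absurd rfl hbd
      · exact absurd (nd c h2 h3.symm).symm hac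
      · exact absurd (nd c h3.symm h2).symm hac
      · exact absurd rfl hbd
  rintro ⟨a, b, c, d, hac, hbd, h1, h2, h3, h4, h5, h6⟩
  obtain ⟨a, rfl⟩ := old a b c d hac hbd h1 h2 h3 h4
  obtain ⟨b, rfl⟩ := old b c d _ hbd hac.symm h2 h3 h4 h1
  obtain ⟨c, rfl⟩ := old c d _ _ hac.symm hbd.symm h3 h4 h1 h2
  obtain ⟨d, rfl⟩ := old d _ _ _ hbd.symm hac h4 h1 h2 h3
  rw [sub_ll] at h1 h2 h3 h4 h5 h6
  have hac' : a ≠ c := fun h => hac (by rw [h])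
  have hbd' : b ≠ d := fun h => hbd (by rw [h])
  obtain ⟨h1, -⟩ := h1
  obtain ⟨h2, -⟩ := h2
  obtain ⟨h3, -⟩ := h3
  obtain ⟨h4, -⟩ := h4
  have m1 := h1.ne
  have m2 := h2.ne
  have m3 := h3.ne
  have m4 := h4.ne
  by_cases q1 : H.Adj a c
  · have q2 : ¬ H.Adj b d := by
      intro q2
      grind
    have q3 : (a = x ∧ c = y) ∨ (a = y ∧ c = x) := by tauto
    rcases q3 with ⟨rfl, rfl⟩ | ⟨rfl, rfl⟩
    · exact hd ⟨b, d, hbd', q2, h1.symm, h2, h4, h3.symm⟩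
    · exact hd ⟨b, d, hbd', q2, h2, h1.symm, h3.symm, h4⟩
  · by_cases q2 : H.Adj b d
    · have q3 : (b = x ∧ d = y) ∨ (b = y ∧ d = x) := by tauto
      rcases q3 with ⟨rfl, rfl⟩ | ⟨rfl, rfl⟩
      · exact hd ⟨a, c, hac', q1, h1, h4.symm, h2.symm, h3⟩
      · exact hd ⟨a, c, hac', q1, h4.symm, h1, h3, h2.symm⟩
    · exact hC ⟨a, b, c, d, hac', hbd', h1, h2, h3, h4, q1, q2⟩

/-- subdividing an edge `xy` of a graph `H` having a `k`-clique-partition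
and a frozen `(k+1)`-clique-partition (with `x`, `y` in different cliques of the former,
and either in different cliques of the latter, or forming together a clique of the
latter) yields a graph with a `(k+1)`-clique-partition and a frozen
`(k+2)`-clique-partition; moreover `θ` increases from `k` to `k+1`, and `C₄`-freeness
is preserved (provided, in case (1), that `xy` is not the middle edge of a diamond). -/
theorem stmt18 {V : Type*} [Fintype V] [DecidableEq V] (H : SimpleGraph V) (k : ℕ)
    (f : V → Fin k) (hf : IsCliquePartition H f)
    (F : V → Fin (k+1)) (hF : IsFrozenCliquePartition H F)
    (x y : V) (hxy : H.Adj x y) (hfxy : f x ≠ f y)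
    (hcase : F x ≠ F y ∨ (F x = F y ∧ ∀ z : V, F z = F x → z = x ∨ z = y)) :
    (∃ g : (V ⊕ Fin 2) → Fin (k+1), IsCliquePartition (subdivide H x y) g) ∧
    (∃ g : (V ⊕ Fin 2) → Fin (k+2), IsFrozenCliquePartition (subdivide H x y) g) ∧
    (cliquePartNum H = k → cliquePartNum (subdivide H x y) = k + 1) ∧
    (C4Free H →
      (F x ≠ F y →
        ¬ ∃ r s : V, r ≠ s ∧ ¬ H.Adj r s ∧ H.Adj r x ∧ H.Adj r y ∧ H.Adj s x ∧ H.Adj s y) →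
      C4Free (subdivide H x y)) := by
  refine ⟨⟨extPart f, extPart_clique H x y f hf hfxy⟩, ?_, ?_, ?_⟩
  · rcases hcase with h | ⟨h, hc⟩
    · exact ⟨_, extPart_frozen H x y hxy F hF h⟩
    · exact ⟨_, splitPart_frozen H x y hxy F hF h hc⟩
  · intro hk
    have hmem : k + 1 ∈ {m : ℕ | ∃ g : V ⊕ Fin 2 → Fin m,
        IsCliquePartition (subdivide H x y) g} := ⟨_, extPart_clique H x y f hf hfxy⟩
    refine le_antisymm (Nat.sInf_le hmem) ?_
    change k + 1 ≤ cliquePartNum (subdivide H x y)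
    have hs : cliquePartNum (subdivide H x y) ∈ {m : ℕ | ∃ g : V ⊕ Fin 2 → Fin m,
        IsCliquePartition (subdivide H x y) g} := Nat.sInf_mem ⟨_, hmem⟩
    generalize cliquePartNum (subdivide H x y) = m at hs ⊢
    obtain ⟨g, hg⟩ := hs
    cases m with
    | zero => exact (g (Sum.inr 0)).elim0
    | succ n =>
      obtain ⟨h, hh⟩ := reduce_part H x y hxy n g hg
      have : cliquePartNum H ≤ n := Nat.sInf_le ⟨h, hh⟩
      omega
  · intro hC hd
    refine sub_C4 H x y hxy hC ?_
    rcases hcase with h | ⟨h, hc⟩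
    · exact hd h
    · rintro ⟨r, -, -, -, hrx, hry, -, -⟩
      have hne : F x ≠ F r := by
        intro h'
        rcases hc r h'.symm with rfl | rfl
        · exact hrx.ne rfl
        · exact hry.ne rfl
      obtain ⟨w, hw, hw'⟩ := hF.2 r (F x) hne
      rcases hc w hw with rfl | rfl
      · exact hw' hrx
      · exact hw' hry
end

section
/- For every integer k ≥ 4, there exists a finite simple C4-free graph H with clique partition number θ(H) = k which admits a frozen (k+1)-clique-partition. Consequently, for every integer k ≥ 4, there exists a finite simple 2K2-free graph G with chromatic number χ(G) = k which admits a frozen (k+1)-colouring. -/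
/-- A `2K₂`-free graph with a `k`-clique, a proper `k`-colouring and a frozen colouring. -/
def GoodGraph (k : ℕ) : Prop :=
  ∃ (n : ℕ) (G : SimpleGraph (Fin n)),
    0 < n ∧ (∀ a b, G.Adj a b → ∀ c d, G.Adj c d →
      G.Adj a c ∨ G.Adj a d ∨ G.Adj b c ∨ G.Adj b d) ∧
    (∃ c : Fin n → Fin k, ∀ a b, G.Adj a b → c a ≠ c b) ∧
    (∃ q : Fin k → Fin n, ∀ i j, i ≠ j → G.Adj (q i) (q j)) ∧
    (∃ C : Fin n → Fin (k+1), (∀ a b, G.Adj a b → C a ≠ C b) ∧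
      ∀ v j, j ≠ C v → ∃ w, G.Adj v w ∧ C w = j)

/-- Adjacency rows of the base graph, as bit masks. -/
def baseRow : Fin 10 → ℕ := ![700, 980, 483, 881, 459, 973, 574, 823, 190, 235]

/-- The base graph. -/
def baseG : SimpleGraph (Fin 10) where
  Adj a b := (baseRow a).testBit b.val = true
  symm := ⟨by decide +kernel⟩
  loopless := ⟨by decide +kernel⟩

instance : DecidableRel baseG.Adj := fun a b =>
  inferInstanceAs (Decidable ((baseRow a).testBit b.val = true))

theorem good_base : GoodGraph 4 := by
  refine ⟨10, baseG, by decide, by decide +kernel, ⟨![0, 2, 1, 3, 1, 2, 0, 3, 0, 1], by decide +kernel⟩,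
    ⟨![0, 2, 5, 7], by decide +kernel⟩,
    ⟨![0, 0, 1, 1, 2, 2, 3, 3, 4, 4], by decide +kernel, by decide +kernel⟩⟩

/-- Add a universal vertex. -/
def addTop {n : ℕ} (G : SimpleGraph (Fin n)) : SimpleGraph (Fin (n+1)) where
  Adj x y := Fin.cases (motive := fun _ => Prop)
    (Fin.cases (motive := fun _ => Prop) False (fun _ => True) y)
    (fun a => Fin.cases (motive := fun _ => Prop) True (fun b => G.Adj a b) y) x
  symm := ⟨by
    intro x y
    refine Fin.cases ?_ (fun a => ?_) x <;> refine Fin.cases ?_ (fun b => ?_) y <;>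
      simp [G.adj_comm]⟩
  loopless := ⟨by
    intro x
    refine Fin.cases ?_ (fun a => ?_) x <;> simp⟩

theorem addTop_00 {n : ℕ} (G : SimpleGraph (Fin n)) : ¬ (addTop G).Adj 0 0 := fun h => h
theorem addTop_0s {n : ℕ} (G : SimpleGraph (Fin n)) (a : Fin n) :
    (addTop G).Adj 0 a.succ := trivial
theorem addTop_s0 {n : ℕ} (G : SimpleGraph (Fin n)) (a : Fin n) :
    (addTop G).Adj a.succ 0 := trivial
theorem addTop_ss {n : ℕ} (G : SimpleGraph (Fin n)) (a b : Fin n) :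
    (addTop G).Adj a.succ b.succ ↔ G.Adj a b := Iff.rfl

theorem good_step (k : ℕ) (h : GoodGraph k) : GoodGraph (k+1) := by
  obtain ⟨n, G, hn, h2, ⟨c, hc⟩, ⟨q, hq⟩, C, hC, hf⟩ := h
  refine ⟨n+1, addTop G, n.succ_pos, ?_, ⟨Fin.cons 0 (fun i => (c i).succ), ?_⟩,
    ⟨Fin.cons 0 (fun i => (q i).succ), ?_⟩, Fin.cons 0 (fun i => (C i).succ), ?_, ?_⟩
  · simp only [Fin.forall_fin_succ, addTop_00, addTop_0s, addTop_s0, addTop_ss]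
    simp
    exact h2
  · simp only [Fin.forall_fin_succ (n := n), addTop_00, addTop_0s, addTop_s0, addTop_ss,
      Fin.cons_zero, Fin.cons_succ]
    simp [Fin.succ_ne_zero, (Fin.succ_ne_zero _).symm]
    exact hc
  · simp only [Fin.forall_fin_succ (n := k), Fin.cons_zero, Fin.cons_succ, addTop_00, addTop_0s,
      addTop_s0, addTop_ss]
    simp
    exact hq
  · simp only [Fin.forall_fin_succ (n := n), addTop_00, addTop_0s, addTop_s0, addTop_ss,
      Fin.cons_zero, Fin.cons_succ]
    simp [Fin.succ_ne_zero, (Fin.succ_ne_zero _).symm]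
    exact hC
  · have surj : ∀ j, ∃ w, C w = j := by
      intro j
      by_cases hj : j = C ⟨0, hn⟩
      · exact ⟨_, hj.symm⟩
      · obtain ⟨w, _, hw⟩ := hf _ j hj
        exact ⟨w, hw⟩
    intro v
    refine Fin.cases ?_ (fun a => ?_) v
    · intro j
      refine Fin.cases ?_ (fun b => ?_) j
      · intro h; exact absurd rfl h
      · intro _
        obtain ⟨w, hw⟩ := surj b
        exact ⟨w.succ, addTop_0s G w, by simp [hw]⟩
    · intro j
      refine Fin.cases ?_ (fun b => ?_) j
      · intro _; exact ⟨0, addTop_s0 G a, rfl⟩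
      · intro h
        obtain ⟨w, h1, h2⟩ := hf a b (fun h' => h (by simp [h']))
        exact ⟨w.succ, h1, by simp [h2]⟩

theorem good_all (k : ℕ) (hk : 4 ≤ k) : GoodGraph k :=
  Nat.le_induction good_base (fun k _ h => good_step k h) k hk

/-- for every `k ≥ 4` there is a `C₄`-free graph with clique partition
number `k` admitting a frozen `(k+1)`-clique-partition; consequently, for every `k ≥ 4`
there is a `2K₂`-free graph with chromatic number `k` admitting a frozen
`(k+1)`-colouring. -/
theorem stmt19 : ∀ k : ℕ, 4 ≤ k →
    (∃ (n : ℕ) (H : SimpleGraph (Fin n)), C4Free H ∧ cliquePartNum H = k ∧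
      ∃ g : Fin n → Fin (k+1), IsFrozenCliquePartition H g) ∧
    (∃ (n : ℕ) (G : SimpleGraph (Fin n)), TwoK2Free G ∧
      G.chromaticNumber = (k : ℕ∞) ∧
      ∃ C : G.Coloring (Fin (k+1)), IsFrozenColoring G C) := by
  intro k hk
  obtain ⟨n, G, hn, h2, ⟨c, hc⟩, ⟨q, hq⟩, C, hC, hf⟩ := good_all k hk
  refine ⟨⟨n, Gᶜ, ?_, ?_, C, ?_, ?_⟩, ⟨n, G, ?_, ?_, SimpleGraph.Coloring.mk C (fun {a b} h => hC a b h), ?_⟩⟩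
  · rintro ⟨a, b, c, d, hac, hbd, h1, h3, h4, h5, h6, h7⟩
    simp only [SimpleGraph.compl_adj, not_and, not_not] at h1 h3 h4 h5 h6 h7
    rcases h2 a c (h6 hac) b d (h7 hbd) with h | h | h | h
    · exact h1.2 h
    · exact h5.2 h.symm
    · exact h3.2 h.symm
    · exact h4.2 h
  · apply le_antisymm
    · apply Nat.sInf_le
      exact ⟨c, fun a b hab hne => ⟨hne, fun h => hc a b h hab⟩⟩
    · apply le_csInf
      · exact ⟨k, c, fun a b hab hne => ⟨hne, fun h => hc a b h hab⟩⟩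
      · rintro m ⟨f, hf'⟩
        have : Function.Injective (fun i => f (q i)) := by
          intro i j hij
          by_contra hne
          have h := hq i j hne
          exact (hf' _ _ hij h.ne).2 h
        simpa using Fintype.card_le_of_injective _ this
  · exact fun a b hab hne => ⟨hne, fun h => hC a b h hab⟩
  · intro v j hj
    obtain ⟨w, h1, h3⟩ := hf v j hj
    exact ⟨w, h3, fun h => h.2 h1⟩
  · rintro ⟨a, b, c, d, h1, h3, h4, h5, h6, h7⟩
    rcases h2 a b h1 c d h3 with h | h | h | h <;> contradiction
  · apply le_antisymm
    · exact SimpleGraph.Colorable.chromaticNumber_le ⟨SimpleGraph.Coloring.mk c (fun {a b} h => hc a b h)⟩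
    · rw [SimpleGraph.le_chromaticNumber_iff_colorable]
      rintro m ⟨f⟩
      have : Function.Injective (fun i => f (q i)) := by
        intro i j hij
        by_contra hne
        exact f.valid (hq i j hne) hij
      simpa using Fintype.card_le_of_injective _ this
  · exact hf
end
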